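/- arXiv:1803.03413 — 2 statements merged into one kernel-verified Lean document; each statement's English description precedes it below -/
import Mathlib

section
/- Let γ ∈ (0,1), let a < t be real numbers, and let v : ℝ → ℝ be continuously differentiable on [a,t]. Extend v to the left of a by the constant value v(a), i.e. set ṽ(s) = v(max(s,a)). Then the Caputo fractional derivative equals the Marchaud-type extended derivative: (1/Γ(1−γ)) ∫_a^t (t−s)^{−γ} v′(s) ds = (γ/Γ(1−γ)) ∫_{−∞}^t (v(t) − ṽ(s)) (t−s)^{−1−γ} ds; in particular the integral on the right converges. -/
open MeasureTheory

/-!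
Substitute `v t - v (max s a) = ∫ r in max s a..t, v' r` into the Marchaud integral and exchange
the order of integration over the region `{(s, r) | s < r, a < r < t}`. The inner integral is then
that of the kernel alone, `∫ s in Iio r, (t - s) ^ (-1 - γ) = (t - r) ^ (-γ) / γ`, and what remains
is the Caputo integral.
-/

theorem aestronglyMeasurable_of_smul {E β : Type*} [NormedAddCommGroup E]
    [NormedSpace ℝ E] [MeasurableSpace β] {μ : Measure β} {k : β → ℝ} {f : β → E}
    (hk : AEMeasurable k μ) (hk0 : ∀ᵐ x ∂μ, k x ≠ 0)
    (hkf : AEStronglyMeasurable (fun x => k x • f x) μ) : AEStronglyMeasurable f μ := by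
  refine (hk.inv.aestronglyMeasurable.smul hkf).congr ?_
  filter_upwards [hk0] with x hx
  exact inv_smul_smul₀ hx (f x)

theorem integral_eq_sub_of_hasDerivWithinAt_Icc {E : Type*} [NormedAddCommGroup E]
    [NormedSpace ℝ E] [CompleteSpace E] {f f' : ℝ → E} {a b : ℝ} (hab : a ≤ b)
    (hderiv : ∀ x ∈ Set.Icc a b, HasDerivWithinAt f (f' x) (Set.Icc a b) x)
    (hint : IntervalIntegrable f' volume a b) : ∫ x in a..b, f' x = f b - f a :=
  intervalIntegral.integral_eq_sub_of_hasDerivAt_of_le hab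
    (fun x hx => (hderiv x hx).continuousWithinAt)
    (fun x hx => (hderiv x (Set.Ioo_subset_Icc_self hx)).hasDerivAt (Icc_mem_nhds hx.1 hx.2)) hint

section Fubini

variable {α E : Type*} [LinearOrder α] [TopologicalSpace α] [OrderClosedTopology α]
  [SecondCountableTopology α] [MeasurableSpace α] [OpensMeasurableSpace α]
  [NormedAddCommGroup E] [NormedSpace ℝ E] {μ ν : Measure α} [SFinite μ] [SFinite ν]
  {k : α → ℝ} {f : α → E}

theorem integrable_indicator_lt_smul
    (hk : AEStronglyMeasurable k μ) (hf : AEStronglyMeasurable f ν)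
    (hk_int : ∀ᵐ r ∂ν, IntegrableOn k (Set.Iio r) μ)
    (hkf_int : Integrable (fun r => (∫ s in Set.Iio r, ‖k s‖ ∂μ) • f r) ν) :
    Integrable ({p : α × α | p.1 < p.2}.indicator fun p => k p.1 • f p.2) (μ.prod ν) := by
  have hmeas : AEStronglyMeasurable
      ({p : α × α | p.1 < p.2}.indicator fun p => k p.1 • f p.2) (μ.prod ν) :=
    (hk.comp_fst.smul hf.comp_snd).indicator (measurableSet_lt measurable_fst measurable_snd)
  refine (integrable_prod_iff' hmeas).2 ⟨?_, hkf_int.norm.congr (.of_forall fun r => ?_)⟩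
  · filter_upwards [hk_int] with r hr
    exact IntegrableOn.integrable_indicator (hr.smul_const (f r)) measurableSet_Iio
  · have hnonneg : 0 ≤ ∫ s in Set.Iio r, ‖k s‖ ∂μ := integral_nonneg fun _ => norm_nonneg _
    calc ‖(∫ s in Set.Iio r, ‖k s‖ ∂μ) • f r‖
        = ∫ s in Set.Iio r, ‖k s • f r‖ ∂μ := by
          simp only [norm_smul, integral_mul_const, Real.norm_of_nonneg hnonneg]
      _ = ∫ s, ‖(Set.Iio r).indicator (fun s => k s • f r) s‖ ∂μ := by
          simp only [norm_indicator_eq_indicator_norm, integral_indicator measurableSet_Iio]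

theorem integrable_smul_integral_Ioi
    (hk : AEStronglyMeasurable k μ) (hf : AEStronglyMeasurable f ν)
    (hk_int : ∀ᵐ r ∂ν, IntegrableOn k (Set.Iio r) μ)
    (hkf_int : Integrable (fun r => (∫ s in Set.Iio r, ‖k s‖ ∂μ) • f r) ν) :
    Integrable (fun s => k s • ∫ r in Set.Ioi s, f r ∂ν) μ := by
  refine (integrable_indicator_lt_smul hk hf hk_int hkf_int).integral_prod_left.congr
    (.of_forall fun s => ?_)
  change ∫ r, (Set.Ioi s).indicator (fun r => k s • f r) r ∂ν = _
  rw [integral_indicator measurableSet_Ioi, integral_smul]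

theorem integral_smul_integral_Ioi [CompleteSpace E]
    (hk : AEStronglyMeasurable k μ) (hf : AEStronglyMeasurable f ν)
    (hk_int : ∀ᵐ r ∂ν, IntegrableOn k (Set.Iio r) μ)
    (hkf_int : Integrable (fun r => (∫ s in Set.Iio r, ‖k s‖ ∂μ) • f r) ν) :
    ∫ s, k s • ∫ r in Set.Ioi s, f r ∂ν ∂μ = ∫ r, (∫ s in Set.Iio r, k s ∂μ) • f r ∂ν :=
  calc ∫ s, k s • ∫ r in Set.Ioi s, f r ∂ν ∂μ
      = ∫ s, ∫ r, (Set.Ioi s).indicator (fun r => k s • f r) r ∂ν ∂μ := by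
        simp only [integral_indicator measurableSet_Ioi, integral_smul]
    _ = ∫ r, ∫ s, (Set.Iio r).indicator (fun s => k s • f r) s ∂μ ∂ν :=
        integral_integral_swap (integrable_indicator_lt_smul hk hf hk_int hkf_int)
    _ = ∫ r, (∫ s in Set.Iio r, k s ∂μ) • f r ∂ν := by
        simp only [integral_indicator measurableSet_Iio, integral_smul_const]

end Fubini

section Kernel

variable {p r t : ℝ}

theorem integrableOn_Iio_sub_rpow (hp : p < -1) (hr : r < t) :
    IntegrableOn (fun s => (t - s) ^ p) (Set.Iio r) := by
  have h := ((Measure.measurePreserving_sub_left volume t).integrableOn_comp_preimage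
    (MeasurableEquiv.subLeft t).measurableEmbedding).2
    (integrableOn_Ioi_rpow_of_lt hp (sub_pos.2 hr))
  rwa [Set.preimage_const_sub_Ioi, sub_sub_cancel] at h

theorem integral_Iio_sub_rpow (hp : p < -1) (hr : r < t) :
    ∫ s in Set.Iio r, (t - s) ^ p = -(t - r) ^ (p + 1) / (p + 1) := by
  have h := (Measure.measurePreserving_sub_left volume t).setIntegral_preimage_emb
    (MeasurableEquiv.subLeft t).measurableEmbedding (fun x => x ^ p) (Set.Ioi (t - r))
  rwa [Set.preimage_const_sub_Ioi, sub_sub_cancel, integral_Ioi_rpow_of_lt hp (sub_pos.2 hr)] at h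

theorem intervalIntegrable_sub_rpow (hp : -1 < p) (a t : ℝ) :
    IntervalIntegrable (fun s => (t - s) ^ p) volume a t := by
  simpa using (intervalIntegral.intervalIntegrable_rpow' (a := t - a) (b := 0) hp).comp_sub_left t

theorem integral_Iio_sub_rpow_neg_one_sub {γ : ℝ} (hγ : 0 < γ) (hr : r < t) :
    ∫ s in Set.Iio r, (t - s) ^ (-1 - γ) = (t - r) ^ (-γ) / γ := by
  rw [integral_Iio_sub_rpow (by linarith) hr, show -1 - γ + 1 = -γ by ring, neg_div_neg_eq]

theorem integral_Iio_norm_sub_rpow_neg_one_sub {γ : ℝ} (hγ : 0 < γ) (hr : r < t) :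
    ∫ s in Set.Iio r, ‖(t - s) ^ (-1 - γ)‖ = (t - r) ^ (-γ) / γ := by
  rw [← integral_Iio_sub_rpow_neg_one_sub hγ hr]
  refine setIntegral_congr_fun measurableSet_Iio fun s hs => ?_
  exact Real.norm_of_nonneg (Real.rpow_nonneg (sub_nonneg.2 (hs.trans hr).le) _)

end Kernel

section Marchaud

variable {E : Type*} [NormedAddCommGroup E] [NormedSpace ℝ E] {γ a t : ℝ}

theorem integrable_and_integral_sub_rpow_smul_integral_Ioi [CompleteSpace E] {ν : Measure ℝ}
    [SFinite ν] {f : ℝ → E} (hγ : 0 < γ) (hν : ∀ᵐ r ∂ν, r < t)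
    (hf : Integrable (fun r => (t - r) ^ (-γ) • f r) ν) :
    Integrable (fun s => (t - s) ^ (-1 - γ) • ∫ r in Set.Ioi s, f r ∂ν) ∧
    ∫ s, (t - s) ^ (-1 - γ) • ∫ r in Set.Ioi s, f r ∂ν
      = γ⁻¹ • ∫ r, (t - r) ^ (-γ) • f r ∂ν := by
  have hf_meas : AEStronglyMeasurable f ν :=
    aestronglyMeasurable_of_smul (by fun_prop)
      (hν.mono fun r hr => (Real.rpow_pos_of_pos (sub_pos.2 hr) _).ne') hf.aestronglyMeasurable
  have hk_meas : AEStronglyMeasurable (fun s => (t - s) ^ (-1 - γ)) volume :=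
    Measurable.aestronglyMeasurable (by fun_prop)
  have hk_int : ∀ᵐ r ∂ν, IntegrableOn (fun s => (t - s) ^ (-1 - γ)) (Set.Iio r) :=
    hν.mono fun r hr => integrableOn_Iio_sub_rpow (by linarith) hr
  have hkf_int : Integrable (fun r => (∫ s in Set.Iio r, ‖(t - s) ^ (-1 - γ)‖) • f r) ν := by
    refine (hf.smul γ⁻¹).congr (hν.mono fun r hr => ?_)
    simp only [Pi.smul_apply, integral_Iio_norm_sub_rpow_neg_one_sub hγ hr, smul_smul,
      div_eq_inv_mul]
  refine ⟨integrable_smul_integral_Ioi hk_meas hf_meas hk_int hkf_int, ?_⟩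
  rw [integral_smul_integral_Ioi hk_meas hf_meas hk_int hkf_int, ← integral_smul]
  refine integral_congr_ae (hν.mono fun r hr => ?_)
  simp only [integral_Iio_sub_rpow_neg_one_sub hγ hr, smul_smul, div_eq_inv_mul]

theorem setIntegral_Ioi_restrict_Ioo {s : ℝ} (hat : a ≤ t) (hst : s ≤ t) (f : ℝ → E) :
    ∫ r in Set.Ioi s, f r ∂volume.restrict (Set.Ioo a t) = ∫ r in max s a..t, f r := by
  rw [Measure.restrict_restrict measurableSet_Ioi, Set.Ioi_inter_Ioo,
    intervalIntegral.integral_of_le (max_le hst hat), integral_Ioc_eq_integral_Ioo]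

theorem setIntegral_Ioi_restrict_Ioo_eq_zero {s : ℝ} (hts : t ≤ s) (f : ℝ → E) :
    ∫ r in Set.Ioi s, f r ∂volume.restrict (Set.Ioo a t) = 0 := by
  rw [Measure.restrict_restrict measurableSet_Ioi, Set.Ioi_inter_Ioo,
    Set.Ioo_eq_empty (not_lt.2 (hts.trans le_sup_left)), setIntegral_empty]

/-- `hv` and `hint` together say that `v` is absolutely continuous on `[a, t]` with density `v'`,
which moreover is integrable against the kernel `(t - s) ^ (-γ)`. -/
theorem stmt_0_general [CompleteSpace E] {v v' : ℝ → E} (hγ : 0 < γ) (hat : a ≤ t)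
    (hv : ∀ s ∈ Set.Icc a t, ∫ r in s..t, v' r = v t - v s)
    (hint : IntervalIntegrable (fun s => (t - s) ^ (-γ) • v' s) volume a t) :
    IntegrableOn (fun s => (t - s) ^ (-1 - γ) • (v t - v (max s a))) (Set.Iio t) ∧
    ∫ s in a..t, (t - s) ^ (-γ) • v' s
      = γ • ∫ s in Set.Iio t, (t - s) ^ (-1 - γ) • (v t - v (max s a)) := by
  set ν := volume.restrict (Set.Ioo a t) with hν
  obtain ⟨hmarchaud, hswap⟩ := integrable_and_integral_sub_rpow_smul_integral_Ioi hγ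
    ((ae_restrict_mem measurableSet_Ioo).mono fun _ hr => hr.2)
    ((intervalIntegrable_iff_integrableOn_Ioo_of_le hat).1 hint)
  have hincrement : Set.EqOn (fun s => (t - s) ^ (-1 - γ) • ∫ r in Set.Ioi s, v' r ∂ν)
      (fun s => (t - s) ^ (-1 - γ) • (v t - v (max s a))) (Set.Iio t) := fun s hs => by
    have hst : s ≤ t := le_of_lt hs
    simp only [hν, setIntegral_Ioi_restrict_Ioo hat hst,
      hv (max s a) ⟨le_max_right s a, max_le hst hat⟩]
  refine ⟨hmarchaud.integrableOn.congr_fun hincrement measurableSet_Iio, ?_⟩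
  rw [← setIntegral_congr_fun measurableSet_Iio hincrement,
    setIntegral_eq_integral_of_forall_compl_eq_zero fun s hs => by
      rw [hν, setIntegral_Ioi_restrict_Ioo_eq_zero (not_lt.1 hs), smul_zero],
    hswap, smul_inv_smul₀ hγ.ne', intervalIntegral.integral_of_le hat,
    integral_Ioc_eq_integral_Ioo]

end Marchaud

/-- Caputo derivative equals the Marchaud-type extended derivative for a `C¹`
function extended to the left of `a` by its value `v a`. -/
theorem stmt_0 (γ a t : ℝ) (hγ : γ ∈ Set.Ioo (0:ℝ) 1) (hat : a < t)
    (v v' : ℝ → ℝ)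
    (hderiv : ∀ s ∈ Set.Icc a t, HasDerivWithinAt v (v' s) (Set.Icc a t) s)
    (hcont : ContinuousOn v' (Set.Icc a t)) :
    IntegrableOn (fun s => (v t - v (max s a)) * (t - s) ^ (-1 - γ)) (Set.Iio t) ∧
    (1 / Real.Gamma (1 - γ)) * ∫ s in a..t, (t - s) ^ (-γ) * v' s
      = (γ / Real.Gamma (1 - γ)) *
          ∫ s in Set.Iio t, (v t - v (max s a)) * (t - s) ^ (-1 - γ) := by
  have hv (s : ℝ) (hs : s ∈ Set.Icc a t) : ∫ r in s..t, v' r = v t - v s := by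
    have hsub : Set.Icc s t ⊆ Set.Icc a t := Set.Icc_subset_Icc_left hs.1
    exact integral_eq_sub_of_hasDerivWithinAt_Icc hs.2
      (fun x hx => (hderiv x (hsub hx)).mono hsub)
      ((hcont.mono hsub).intervalIntegrable_of_Icc hs.2)
  have hint : IntervalIntegrable (fun s => (t - s) ^ (-γ) * v' s) volume a t :=
    (intervalIntegrable_sub_rpow (neg_lt_neg hγ.2) a t).mul_continuousOn
      (by rwa [Set.uIcc_of_le hat.le])
  obtain ⟨hmarchaud, heq⟩ := stmt_0_general hγ.1 hat.le hv hint
  simp only [smul_eq_mul, mul_comm _ (v t - _)] at hmarchaud heq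
  exact ⟨hmarchaud, by rw [heq]; ring⟩
end

section
/- Let γ ∈ (0,1), M > 0 and T ∈ ℝ, and let η : ℝ → ℝ be continuously differentiable with compact support, satisfying η(t) = 0 for all t ≤ −M. Define the Marchaud derivative D^γη(t) = γ ∫_{−∞}^t (η(t) − η(s)) (t−s)^{−1−γ} ds and the antiderivative (Iη)(t) = ∫_{−∞}^t η(τ) dτ. Then for every t ≤ T, the antiderivative of the fractional derivative equals the fractional derivative of the antiderivative: ∫_{−∞}^t D^γη(τ) dτ = γ ∫_{−∞}^t ((Iη)(t) − (Iη)(s)) (t−s)^{−1−γ} ds, both sides being finite. -/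
open MeasureTheory

/-!
After the substitutions `s = τ - h` on the left and `s = t - h` on the right, both sides of the
identity are, up to the factor `γ`, iterated integrals of
`h ^ (-1 - γ) • (η τ - η (τ - h))` over `τ < t` and `h > 0`, so the statement is Fubini's theorem.
Joint integrability only asks that `h ^ (-1 - γ)` be integrable against the `L¹` modulus of
continuity of `η`, i.e. that `η` have finite `W^{γ,1}` Gagliardo seminorm. For a compactly
supported Lipschitz function that modulus is `O(h)` at `0`, where `γ < 1` makes `h ^ (-γ)`
integrable, and bounded at infinity, where `0 < γ` makes `h ^ (-1 - γ)` integrable.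
-/

open Set

section

variable {E : Type*} [NormedAddCommGroup E]

/-- The `L¹` modulus of continuity of `η` at the shift `h`, which controls the fractional
difference quotients of `η`. It is meant for integrable `η`: a divergent integral gives `0`. -/
noncomputable def l1Modulus (η : ℝ → E) (h : ℝ) : ℝ :=
  ∫ τ, ‖η τ - η (τ - h)‖

lemma l1Modulus_nonneg (η : ℝ → E) (h : ℝ) : 0 ≤ l1Modulus η h :=
  integral_nonneg fun _ => norm_nonneg _

lemma l1Modulus_le_two_mul_integral_norm {η : ℝ → E} (hη : Integrable η) (h : ℝ) :
    l1Modulus η h ≤ 2 * ∫ τ, ‖η τ‖ := by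
  have hη_shift : Integrable fun τ => η (τ - h) := hη.comp_sub_right h
  calc l1Modulus η h ≤ ∫ τ, (‖η τ‖ + ‖η (τ - h)‖) :=
        integral_mono (hη.sub hη_shift).norm (hη.norm.add hη_shift.norm) fun _ => norm_sub_le _ _
    _ = 2 * ∫ τ, ‖η τ‖ := by
        rw [integral_add hη.norm hη_shift.norm, integral_sub_right_eq_self (fun τ => ‖η τ‖) h,
          two_mul]

lemma norm_sub_comp_sub_le_indicator_tsupport {η : ℝ → E} {L : NNReal}
    (hL : LipschitzWith L η) (h τ : ℝ) :
    ‖η τ - η (τ - h)‖ ≤ (tsupport η).indicator (fun _ => L * |h|) τ +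
      (tsupport η).indicator (fun _ => L * |h|) (τ - h) := by
  have h_indicator_nonneg (x : ℝ) : 0 ≤ (tsupport η).indicator (fun _ => L * |h|) x :=
    indicator_nonneg (fun _ _ => by positivity) x
  have h_lip : ‖η τ - η (τ - h)‖ ≤ L * |h| := by
    simpa [Real.dist_eq, dist_eq_norm] using hL.dist_le_mul τ (τ - h)
  by_cases hτ : τ ∈ tsupport η
  · rw [indicator_of_mem hτ]
    exact h_lip.trans (le_add_of_nonneg_right (h_indicator_nonneg _))
  by_cases hτh : τ - h ∈ tsupport η
  · rw [indicator_of_mem hτh]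
    exact h_lip.trans (le_add_of_nonneg_left (h_indicator_nonneg _))
  · rw [image_eq_zero_of_notMem_tsupport hτ, image_eq_zero_of_notMem_tsupport hτh, sub_zero,
      norm_zero]
    exact add_nonneg (h_indicator_nonneg _) (h_indicator_nonneg _)

lemma l1Modulus_le_of_lipschitzWith {η : ℝ → E} {L : NNReal} (hL : LipschitzWith L η)
    (hsupp : HasCompactSupport η) (h : ℝ) :
    l1Modulus η h ≤ 2 * volume.real (tsupport η) * L * |h| := by
  set g : ℝ → ℝ := (tsupport η).indicator fun _ => L * |h|
  have hg : Integrable g :=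
    (integrable_indicator_iff hsupp.measurableSet).2
      (integrableOn_const hsupp.measure_lt_top.ne)
  calc l1Modulus η h ≤ ∫ τ, (g τ + g (τ - h)) :=
        integral_mono_of_nonneg (.of_forall fun _ => norm_nonneg _)
          (hg.add (hg.comp_sub_right h)) (.of_forall (norm_sub_comp_sub_le_indicator_tsupport hL h))
    _ = 2 * ∫ τ, g τ := by
        rw [integral_add hg (hg.comp_sub_right h), integral_sub_right_eq_self g h, two_mul]
    _ = 2 * volume.real (tsupport η) * L * |h| := by
        rw [integral_indicator hsupp.measurableSet, setIntegral_const, smul_eq_mul]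
        ring

lemma aestronglyMeasurable_sub_comp_sub {η : ℝ → E}
    (hη : AEStronglyMeasurable η) (ν : Measure ℝ) [SFinite ν] :
    AEStronglyMeasurable (fun p : ℝ × ℝ => η p.1 - η (p.1 - p.2)) (volume.prod ν) :=
  hη.comp_fst.sub
    (hη.comp_quasiMeasurePreserving (quasiMeasurePreserving_sub_of_right_invariant volume ν))

lemma aestronglyMeasurable_l1Modulus {η : ℝ → E} (hη : AEStronglyMeasurable η)
    (ν : Measure ℝ) [SFinite ν] : AEStronglyMeasurable (l1Modulus η) ν :=
  (aestronglyMeasurable_sub_comp_sub hη ν).norm.prod_swap.integral_prod_right'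

lemma integrableOn_rpow_mul_l1Modulus_of_le_rpow {η : ℝ → E} (hη : Integrable η) {γ β C : ℝ}
    (hγ : 0 < γ) (hγβ : γ < β) (hC : ∀ h ∈ Ioc (0 : ℝ) 1, l1Modulus η h ≤ C * h ^ β) :
    IntegrableOn (fun h => h ^ (-1 - γ) * l1Modulus η h) (Ioi 0) := by
  have h_meas (s : Set ℝ) : AEStronglyMeasurable (fun h => h ^ (-1 - γ) * l1Modulus η h)
      (volume.restrict s) :=
    (by fun_prop : Measurable fun h : ℝ => h ^ (-1 - γ)).aestronglyMeasurable.mul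
      (aestronglyMeasurable_l1Modulus hη.1 _)
  have h_norm {h : ℝ} (hh : 0 < h) :
      ‖h ^ (-1 - γ) * l1Modulus η h‖ = h ^ (-1 - γ) * l1Modulus η h :=
    Real.norm_of_nonneg (mul_nonneg (Real.rpow_nonneg hh.le _) (l1Modulus_nonneg η h))
  rw [← Ioc_union_Ioi_eq_Ioi (zero_le_one' ℝ)]
  refine IntegrableOn.union ?near_zero ?at_infinity
  case near_zero =>
    have h_dom : IntegrableOn (fun h : ℝ => h ^ (β - 1 - γ) * C) (Ioc 0 1) :=
      ((intervalIntegrable_iff_integrableOn_Ioc_of_le zero_le_one).1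
        (intervalIntegral.intervalIntegrable_rpow' (by linarith))).mul_const C
    refine h_dom.mono' (h_meas _) (ae_restrict_of_forall_mem measurableSet_Ioc fun h hh => ?_)
    calc ‖h ^ (-1 - γ) * l1Modulus η h‖ = h ^ (-1 - γ) * l1Modulus η h := h_norm hh.1
      _ ≤ h ^ (-1 - γ) * (C * h ^ β) :=
          mul_le_mul_of_nonneg_left (hC h hh) (Real.rpow_nonneg hh.1.le _)
      _ = h ^ (β - 1 - γ) * C := by
          rw [show β - 1 - γ = (-1 - γ) + β by ring, Real.rpow_add hh.1]
          ring
  case at_infinity =>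
    have h_dom : IntegrableOn (fun h : ℝ => h ^ (-1 - γ) * (2 * ∫ τ, ‖η τ‖)) (Ioi 1) :=
      (integrableOn_Ioi_rpow_of_lt (by linarith) one_pos).mul_const _
    refine h_dom.mono' (h_meas _) (ae_restrict_of_forall_mem measurableSet_Ioi fun h hh => ?_)
    have h_pos : 0 < h := one_pos.trans hh
    rw [h_norm h_pos]
    exact mul_le_mul_of_nonneg_left (l1Modulus_le_two_mul_integral_norm hη h)
      (Real.rpow_nonneg h_pos.le _)

lemma integrableOn_rpow_mul_l1Modulus_of_lipschitzWith {η : ℝ → E} {L : NNReal}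
    (hL : LipschitzWith L η) (hsupp : HasCompactSupport η) {γ : ℝ} (hγ : γ ∈ Ioo (0 : ℝ) 1) :
    IntegrableOn (fun h => h ^ (-1 - γ) * l1Modulus η h) (Ioi 0) := by
  refine integrableOn_rpow_mul_l1Modulus_of_le_rpow (C := 2 * volume.real (tsupport η) * L)
    (hL.continuous.integrable_of_hasCompactSupport hsupp) hγ.1 hγ.2 fun h hh => ?_
  simpa only [Real.rpow_one, abs_of_pos hh.1] using l1Modulus_le_of_lipschitzWith hL hsupp h

lemma measurePreserving_sub_left_Ioi_Iio (t : ℝ) :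
    MeasurePreserving (fun h => t - h) (volume.restrict (Ioi 0)) (volume.restrict (Iio t)) := by
  simpa only [preimage_const_sub_Iio, sub_self] using
    (Measure.measurePreserving_sub_left volume t).restrict_preimage (measurableSet_Iio (a := t))

variable [NormedSpace ℝ E]

lemma setIntegral_Iio_eq_setIntegral_Ioi_sub (f : ℝ → E) (t : ℝ) :
    ∫ s in Iio t, f s = ∫ h in Ioi 0, f (t - h) :=
  ((measurePreserving_sub_left_Ioi_Iio t).integral_comp
    (MeasurableEquiv.subLeft t).measurableEmbedding f).symm

lemma setIntegral_Iio_comp_sub_right (f : ℝ → E) (t h : ℝ) :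
    ∫ τ in Iio t, f (τ - h) = ∫ τ in Iio (t - h), f τ := by
  simpa only [preimage_sub_const_Iio, sub_add_cancel] using
    (measurePreserving_sub_right volume h).setIntegral_preimage_emb
      (MeasurableEquiv.subRight h).measurableEmbedding f (Iio (t - h))

/-- The Marchaud (extended Caputo) derivative of order `γ` of `u` at `t`, normalized by the factor
`γ` only, without `Γ(1 - γ)⁻¹`. It is a Bochner integral, hence `0` if the integrand is not
integrable. -/
noncomputable def marchaudDeriv (γ : ℝ) (u : ℝ → E) (t : ℝ) : E :=
  γ • ∫ s in Iio t, (t - s) ^ (-1 - γ) • (u t - u s)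

/-- The antiderivative of `u` from `-∞`, the operator written `∂_t⁻¹` in the literature. -/
noncomputable def primitiveIio (u : ℝ → E) (t : ℝ) : E :=
  ∫ τ in Iio t, u τ

lemma marchaudDeriv_eq_integral_Ioi (γ : ℝ) (u : ℝ → E) (t : ℝ) :
    marchaudDeriv γ u t = γ • ∫ h in Ioi 0, h ^ (-1 - γ) • (u t - u (t - h)) := by
  simp only [marchaudDeriv, setIntegral_Iio_eq_setIntegral_Ioi_sub _ t, sub_sub_cancel]

lemma marchaudDeriv_eq_mul (γ : ℝ) (u : ℝ → ℝ) :
    marchaudDeriv γ u = fun t => γ * ∫ s in Iio t, (u t - u s) * (t - s) ^ (-1 - γ) := by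
  funext t
  simp only [marchaudDeriv, smul_eq_mul, mul_comm]

lemma primitiveIio_sub_primitiveIio_sub {η : ℝ → E} (hη : Integrable η) (t h : ℝ) :
    primitiveIio η t - primitiveIio η (t - h) = ∫ τ in Iio t, (η τ - η (τ - h)) := by
  rw [integral_sub hη.integrableOn (hη.comp_sub_right h).integrableOn,
    setIntegral_Iio_comp_sub_right, primitiveIio, primitiveIio]

lemma integrable_prod_smul_sub_comp_sub {η : ℝ → E} (hη : Integrable η) {ν : Measure ℝ} [SFinite ν]
    {k : ℝ → ℝ} (hk : AEStronglyMeasurable k ν)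
    (hkη : Integrable (fun h => k h * l1Modulus η h) ν) :
    Integrable (fun p : ℝ × ℝ => k p.2 • (η p.1 - η (p.1 - p.2))) (volume.prod ν) := by
  refine (integrable_prod_iff' (hk.comp_snd.smul (aestronglyMeasurable_sub_comp_sub hη.1 ν))).2
    ⟨.of_forall fun h => (hη.sub (hη.comp_sub_right h)).smul (k h), hkη.norm.congr ?_⟩
  refine .of_forall fun h => ?_
  change ‖k h * l1Modulus η h‖ = ∫ τ, ‖k h • (η τ - η (τ - h))‖
  rw [norm_mul, Real.norm_of_nonneg (l1Modulus_nonneg η h)]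
  simp only [norm_smul, integral_const_mul, l1Modulus]

theorem stmt_1_general [CompleteSpace E] {γ : ℝ} {η : ℝ → E} (hη : Integrable η)
    (hγη : IntegrableOn (fun h => h ^ (-1 - γ) * l1Modulus η h) (Ioi 0)) (t : ℝ) :
    IntegrableOn (marchaudDeriv γ η) (Iio t) ∧
      IntegrableOn (fun s => (t - s) ^ (-1 - γ) • (primitiveIio η t - primitiveIio η s)) (Iio t) ∧
      ∫ τ in Iio t, marchaudDeriv γ η τ = marchaudDeriv γ (primitiveIio η) t := by
  have h_joint : Integrable (fun p : ℝ × ℝ => p.2 ^ (-1 - γ) • (η p.1 - η (p.1 - p.2)))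
      ((volume.restrict (Iio t)).prod (volume.restrict (Ioi 0))) :=
    (integrable_prod_smul_sub_comp_sub hη (by fun_prop) hγη).mono_measure
      (Measure.prod_mono Measure.restrict_le_self le_rfl)
  have h_primitive (h : ℝ) : h ^ (-1 - γ) • (primitiveIio η t - primitiveIio η (t - h)) =
      ∫ τ in Iio t, h ^ (-1 - γ) • (η τ - η (τ - h)) := by
    rw [primitiveIio_sub_primitiveIio_sub hη, integral_smul]
  refine ⟨?_, ?_, ?_⟩
  · rw [funext (marchaudDeriv_eq_integral_Ioi γ η)]
    exact h_joint.integral_prod_left.smul γ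
  · rw [IntegrableOn, ← (measurePreserving_sub_left_Ioi_Iio t).integrable_comp_emb
      (MeasurableEquiv.subLeft t).measurableEmbedding]
    simpa only [Function.comp_def, sub_sub_cancel, h_primitive] using h_joint.integral_prod_right
  · simp only [marchaudDeriv_eq_integral_Ioi, h_primitive]
    rw [integral_smul, integral_integral_swap h_joint]

end

/-- The switch lemma: integration from `-∞` commutes with the Marchaud
fractional derivative on smooth compactly supported functions vanishing in the
distant past. -/
theorem stmt_1 (γ M T : ℝ) (hγ : γ ∈ Set.Ioo (0:ℝ) 1) (hM : 0 < M)
    (η : ℝ → ℝ) (hη : ContDiff ℝ 1 η) (hsupp : HasCompactSupport η)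
    (hzero : ∀ t ≤ -M, η t = 0) :
    ∀ t ≤ T,
      IntegrableOn (fun τ => γ * ∫ s in Set.Iio τ, (η τ - η s) * (τ - s) ^ (-1 - γ))
        (Set.Iio t) ∧
      IntegrableOn
        (fun s => ((∫ τ in Set.Iio t, η τ) - ∫ τ in Set.Iio s, η τ) * (t - s) ^ (-1 - γ))
        (Set.Iio t) ∧
      (∫ τ in Set.Iio t, γ * ∫ s in Set.Iio τ, (η τ - η s) * (τ - s) ^ (-1 - γ))
        = γ * ∫ s in Set.Iio t,
            ((∫ τ in Set.Iio t, η τ) - ∫ τ in Set.Iio s, η τ) * (t - s) ^ (-1 - γ) := by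
  intro t _
  obtain ⟨L, hL⟩ := hη.lipschitzWith_of_hasCompactSupport hsupp one_ne_zero
  simpa only [marchaudDeriv_eq_mul, primitiveIio, smul_eq_mul, mul_comm] using
    stmt_1_general (hη.continuous.integrable_of_hasCompactSupport hsupp)
      (integrableOn_rpow_mul_l1Modulus_of_lipschitzWith hL hsupp hγ) t
end
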